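/- For all x, y in the interval [1/α_1, ∞), |x·sin(1/x) − y·sin(1/y)| ≤ √(2·|y − x|). -/

import Mathlib

/-!
Write `f x = x * sin (1 / x)`. It is the height of the vector of length `x` and argument `1 / x`, so
`|f x - f y|` is at most the distance between two such vectors. The law of cosines and
`1 - cos t ≤ 3 / 4 * |t|` then give `(f x - f y) ^ 2 ≤ |x - y| ^ 2 + 3 / 2 * |x - y|`, which is
enough when `|x - y| ≤ 1 / 2`.
When `1 / 2 ≤ |x - y|`, only an oscillation larger than `1` could do harm. Since `f ≤ 1`, it forces
the smaller value to be negative, hence to be attained at a point of `(0, 1 / π)`, while the larger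
value, close to `1`, is attained at a point not smaller than itself; so the points are far apart.
-/

open Real Set

lemma concaveOn_le_add_mul_sub {s : Set ℝ} {g : ℝ → ℝ} {g' a b : ℝ} (hg : ConcaveOn ℝ s g)
    (ha : a ∈ s) (hb : b ∈ s) (hg' : HasDerivAt g g' a) : g b ≤ g a + g' * (b - a) := by
  rcases lt_trichotomy a b with hab | rfl | hba
  · have hslope := hg.slope_le_of_hasDerivAt ha hb hab hg'
    rw [slope_def_field, div_le_iff₀ (sub_pos.2 hab)] at hslope
    linarith
  · simp
  · have hslope := hg.le_slope_of_hasDerivAt hb ha hba hg'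
    rw [slope_def_field, le_div_iff₀ (sub_pos.2 hba)] at hslope
    linarith

lemma sin_le_sin_add_cos_mul_sub {a b : ℝ} (ha : a ∈ Icc 0 π) (hb : b ∈ Icc 0 π) :
    sin b ≤ sin a + cos a * (b - a) :=
  concaveOn_le_add_mul_sub strictConcaveOn_sin_Icc.concaveOn ha hb (hasDerivAt_sin a)

-- A rational line slightly above the tangent to the sine at `π / 4`.
lemma sin_le_seven_tenths_mul_add {t : ℝ} (ht : -(1 / 5) ≤ t) : sin t ≤ 7 / 10 * t + 1 / 6 := by
  have hπ := pi_gt_d2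
  rcases le_total t 0 with ht0 | ht0
  · linarith [sin_nonpos_of_nonpos_of_neg_pi_le ht0 (by linarith)]
  rcases le_total (3 / 2) t with ht2 | ht2
  · linarith [sin_le_one t]
  have htangent : sin t ≤ √2 / 2 * (1 + t - π / 4) := by
    have := sin_le_sin_add_cos_mul_sub (a := π / 4) ⟨by positivity, by linarith⟩
      ⟨ht0, by linarith⟩
    rw [sin_pi_div_four, cos_pi_div_four] at this
    linarith
  have hsqrt : √2 ≤ 1.415 := sqrt_le_iff.2 (by norm_num)
  calc sin t ≤ √2 / 2 * (1 + t - π / 4) := htangent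
    _ ≤ 1.415 / 2 * (1 + t - π / 4) := by gcongr; linarith [pi_lt_four]
    _ ≤ 7 / 10 * t + 1 / 6 := by linarith

lemma one_sub_cos_le_mul_abs (t : ℝ) : 1 - cos t ≤ 3 / 4 * |t| := by
  rw [← cos_abs]
  rcases le_total |t| (3 / 2) with ht | ht
  · nlinarith [one_sub_sq_div_two_le_cos (x := |t|), abs_nonneg t]
  · have hsin := sin_le_seven_tenths_mul_add (t := |t| - π / 2) (by linarith [pi_lt_d2])
    rw [sin_sub_pi_div_two] at hsin
    linarith [pi_gt_d2]

lemma sq_mul_sin_sub_mul_sin_le (r s a b : ℝ) :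
    (r * sin a - s * sin b) ^ 2 ≤ (r - s) ^ 2 + 2 * r * s * (1 - cos (a - b)) := by
  have law_of_cosines : (r * sin a - s * sin b) ^ 2 + (r * cos a - s * cos b) ^ 2 =
      (r - s) ^ 2 + 2 * r * s * (1 - cos (a - b)) := by
    rw [cos_sub]
    linear_combination r ^ 2 * sin_sq_add_cos_sq a + s ^ 2 * sin_sq_add_cos_sq b
  linarith [sq_nonneg (r * cos a - s * cos b)]

lemma sq_mul_sin_one_div_sub_le {x y : ℝ} (hx : 0 < x) (hy : 0 < y) :
    (x * sin (1 / x) - y * sin (1 / y)) ^ 2 ≤ |x - y| ^ 2 + 3 / 2 * |x - y| := by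
  have hangle : x * y * |1 / x - 1 / y| = |x - y| := by
    rw [← abs_of_pos (mul_pos hx hy), ← abs_mul, abs_sub_comm x y]
    congr 1
    field_simp
  calc (x * sin (1 / x) - y * sin (1 / y)) ^ 2
      ≤ (x - y) ^ 2 + 2 * x * y * (1 - cos (1 / x - 1 / y)) := sq_mul_sin_sub_mul_sin_le ..
    _ ≤ (x - y) ^ 2 + 2 * x * y * (3 / 4 * |1 / x - 1 / y|) := by
      gcongr
      exact one_sub_cos_le_mul_abs _
    _ = |x - y| ^ 2 + 3 / 2 * |x - y| := by
      rw [sq_abs, ← hangle]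
      ring

lemma mul_sin_one_div_le_one {x : ℝ} (hx : 0 < x) : x * sin (1 / x) ≤ 1 :=
  calc x * sin (1 / x) ≤ x * (1 / x) := by gcongr; exact sin_le (by positivity)
    _ = 1 := mul_one_div_cancel hx.ne'

lemma mul_sin_one_div_le_self {x : ℝ} (hx : 0 ≤ x) : x * sin (1 / x) ≤ x :=
  mul_le_of_le_one_right hx (sin_le_one _)

lemma neg_self_le_mul_sin_one_div {x : ℝ} (hx : 0 ≤ x) : -x ≤ x * sin (1 / x) := by
  nlinarith [neg_one_le_sin (1 / x)]

lemma two_mul_sub_le_mul_sin_one_div {x : ℝ} (hx : 0 < x) (hneg : x * sin (1 / x) < 0) :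
    2 * x - 7 / 10 ≤ x * sin (1 / x) := by
  have hπ : π < 1 / x := by
    by_contra! hle
    exact hneg.not_ge (mul_nonneg hx.le (sin_nonneg_of_nonneg_of_le_pi (by positivity) hle))
  have hsin : 2 - 7 / 10 * (1 / x) ≤ sin (1 / x) := by
    have := sin_le_seven_tenths_mul_add (t := 1 / x - π) (by linarith)
    rw [sin_sub_pi] at this
    linarith [pi_gt_d2]
  calc 2 * x - 7 / 10 = x * (2 - 7 / 10 * (1 / x)) := by field_simp
    _ ≤ x * sin (1 / x) := by gcongr

lemma sq_mul_sin_one_div_sub_le_of_one_lt {x y : ℝ} (hx : 0 < x) (hy : 0 < y)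
    (hlt : 1 < y * sin (1 / y) - x * sin (1 / x)) :
    (y * sin (1 / y) - x * sin (1 / x)) ^ 2 ≤ 2 * (y - x) := by
  have hy_one := mul_sin_one_div_le_one hy
  have hy_self := mul_sin_one_div_le_self hy.le
  have hx_self := neg_self_le_mul_sin_one_div hx.le
  have hx_line := two_mul_sub_le_mul_sin_one_div hx (by linarith)
  set D := y * sin (1 / y) - x * sin (1 / x)
  -- `7 / 30` bounds the minimum of `x` and `7 / 10 - 2 * x`, hence also `-(x * sin (1 / x))`.
  have hdist : 2 * D - 14 / 15 ≤ 2 * (y - x) := by linarith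
  have hsq : (D - 1) ^ 2 ≤ (7 / 30) ^ 2 := sq_le_sq' (by linarith) (by linarith)
  calc D ^ 2 = (D - 1) ^ 2 + (2 * D - 1) := by ring
    _ ≤ (7 / 30) ^ 2 + (2 * D - 1) := by gcongr
    _ ≤ 2 * (y - x) := by linarith [hdist]

theorem holder_on_tail_general {x y : ℝ} (hx : 0 < x) (hy : 0 < y) :
    |x * sin (1 / x) - y * sin (1 / y)| ≤ √(2 * |y - x|) := by
  apply abs_le_sqrt
  rcases le_total |x - y| (1 / 2) with hnear | hfar
  · rw [abs_sub_comm y x]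
    nlinarith [sq_mul_sin_one_div_sub_le hx hy, abs_nonneg (x - y)]
  rcases le_or_gt |x * sin (1 / x) - y * sin (1 / y)| 1 with hle | hgt
  · rw [abs_sub_comm y x]
    linarith [(sq_le_one_iff_abs_le_one _).2 hle]
  rcases lt_abs.1 hgt with hgt | hgt
  · linarith [sq_mul_sin_one_div_sub_le_of_one_lt hy hx hgt, neg_le_abs (y - x)]
  · rw [neg_sub] at hgt
    rw [sub_sq_comm]
    linarith [sq_mul_sin_one_div_sub_le_of_one_lt hx hy hgt, le_abs_self (y - x)]

theorem holder_on_tail (α₁ : ℝ)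
    (hα₁ : α₁ ∈ Set.Ioo Real.pi (3 * Real.pi / 2) ∧
      Real.sin α₁ - α₁ * Real.cos α₁ = 0)
    (x y : ℝ) (hx : x ∈ Set.Ici (1 / α₁)) (hy : y ∈ Set.Ici (1 / α₁)) :
    |x * Real.sin (1 / x) - y * Real.sin (1 / y)| ≤ Real.sqrt (2 * |y - x|) := by
  have hpos : 0 < 1 / α₁ := one_div_pos.2 (pi_pos.trans hα₁.1.1)
  exact holder_on_tail_general (hpos.trans_le hx) (hpos.trans_le hy)
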